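/- For every integer μ ≥ 2 and every n ≥ 1 there exists a vector (s_0,...,s_n) of positive integers with s_0 = 1 such that the n-dimensional lattice Λ_n = {z ∈ Z^{n+1} : Σ s_i z_i = 0} has minimum at least μ and density Δ(Λ_n) ≥ (1 + n/(4μ))^{−n/2} / (2^n √((n+1)μ)). -/

import Mathlib

open Real
open MeasureTheory

noncomputable def zball (n μ : ℕ) : Finset (Fin n → ℤ) :=
  (Fintype.piFinset (fun _ => Finset.Icc (-(μ:ℤ)) μ)).filter (fun w => ∑ i, w i ^ 2 ≤ (μ:ℤ))

lemma mem_zball {n μ : ℕ} {w : Fin n → ℤ} : w ∈ zball n μ ↔ ∑ i, w i ^ 2 ≤ (μ:ℤ) := by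
  unfold zball
  simp only [Finset.mem_filter, Fintype.mem_piFinset, Finset.mem_Icc, and_iff_right_iff_imp]
  intro h i
  have h1 : w i ^ 2 ≤ ∑ i, w i ^ 2 :=
    Finset.single_le_sum (f := fun i => w i ^ 2) (fun _ _ => sq_nonneg _) (Finset.mem_univ i)
  constructor <;> nlinarith

lemma zball_card_ge {n μ : ℕ} (hn : 1 ≤ n) (hμ : 1 ≤ μ) : 3 ≤ (zball n μ).card := by
  have : Finset.image (fun a : ℤ => (Pi.single (⟨0, hn⟩ : Fin n) a : Fin n → ℤ)) {-1, 0, 1}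
      ⊆ zball n μ := by
    intro w hw
    simp only [Finset.mem_image] at hw
    obtain ⟨a, ha, rfl⟩ := hw
    rw [mem_zball, Finset.sum_eq_single (⟨0, hn⟩ : Fin n)]
    · simp only [Pi.single_eq_same]
      have : a ^ 2 ≤ 1 := by
        simp only [Finset.mem_insert, Finset.mem_singleton] at ha
        rcases ha with rfl | rfl | rfl <;> norm_num
      have : (1:ℤ) ≤ μ := by exact_mod_cast hμ
      linarith
    · intro b _ hb
      simp [Pi.single_eq_of_ne hb]
    · simp
  have h2 := Finset.card_le_card this
  rw [Finset.card_image_of_injective _ (Pi.single_injective _)] at h2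
  simpa using h2

lemma vol_ball (n : ℕ) (hn : 1 ≤ n) (R : ℝ) (hR : 0 ≤ R) :
    volume {x : Fin n → ℝ | ∑ i, x i ^ 2 ≤ R} =
      ENNReal.ofReal (R ^ ((n:ℝ)/2) * (π ^ ((n : ℝ) / 2) / Real.Gamma ((n : ℝ) / 2 + 1))) := by
  have : Nonempty (Fin n) := ⟨⟨0, hn⟩⟩
  have h := EuclideanSpace.volume_closedBall (Fin n) (0 : EuclideanSpace ℝ (Fin n)) (√R)
  have h2 := (PiLp.volume_preserving_toLp (Fin n)).measure_preimage
    (measurableSet_closedBall (x := (0 : EuclideanSpace ℝ (Fin n))) (ε := √R)).nullMeasurableSet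
  rw [h] at h2
  have h3 : (WithLp.toLp 2) ⁻¹' Metric.closedBall (0 : EuclideanSpace ℝ (Fin n)) (√R)
     = {x : Fin n → ℝ | ∑ i, x i ^ 2 ≤ R} := by
    ext x
    simp only [Set.mem_preimage, mem_closedBall_zero_iff, EuclideanSpace.norm_eq, Set.mem_ofPred_eq,
      Real.norm_eq_abs, sq_abs]
    rw [Real.sqrt_le_sqrt_iff hR]
  rw [h3] at h2
  rw [h2, ← ENNReal.ofReal_pow (Real.sqrt_nonneg _), ← ENNReal.ofReal_mul (by positivity)]
  have e : ∀ x : ℝ, 0 ≤ x → (√x) ^ n = x ^ ((n:ℝ)/2) := by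
    intro x hx
    rw [Real.sqrt_eq_rpow, ← Real.rpow_natCast, ← Real.rpow_mul hx]
    congr 1; ring
  simp only [Fintype.card_fin]
  rw [e _ hR, e _ Real.pi_pos.le]

lemma half_cube (n : ℕ) (z : Fin n → ℝ) :
    1 ≤ 2 * volume ({u : Fin n → ℝ | ∑ i, z i * u i ≤ 0} ∩
      Set.pi Set.univ (fun _ => Set.Ioo (-(1/2):ℝ) (1/2))) := by
  set H := ({u : Fin n → ℝ | ∑ i, z i * u i ≤ 0} ∩
      Set.pi Set.univ (fun _ => Set.Ioo (-(1/2):ℝ) (1/2)))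
  have hQ : volume (Set.pi Set.univ (fun _ : Fin n => Set.Ioo (-(1/2):ℝ) (1/2))) = 1 := by
    rw [Real.volume_pi_Ioo]; norm_num
  have hsub : Set.pi Set.univ (fun _ : Fin n => Set.Ioo (-(1/2):ℝ) (1/2)) ⊆ H ∪ (-H) := by
    intro u hu
    rcases le_total (∑ i, z i * u i) 0 with h | h
    · exact Or.inl ⟨h, hu⟩
    · refine Or.inr ⟨?_, ?_⟩
      · simpa using h
      · intro i _
        have := hu i trivial
        simp only [Set.mem_Ioo, Pi.neg_apply] at this ⊢
        constructor <;> linarith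
  calc (1:ENNReal) = _ := hQ.symm
    _ ≤ volume (H ∪ (-H)) := measure_mono hsub
    _ ≤ volume H + volume (-H) := measure_union_le _ _
    _ = 2 * volume H := by rw [Measure.measure_neg, two_mul]

lemma zball_card_le (n μ : ℕ) (hn : 1 ≤ n) :
    ((zball n μ).card : ℝ) ≤ 2 * (((μ:ℝ) + n/4) ^ ((n:ℝ)/2) *
      (π ^ ((n : ℝ) / 2) / Real.Gamma ((n : ℝ) / 2 + 1))) := by
  have hG : 0 < Real.Gamma ((n : ℝ) / 2 + 1) := Real.Gamma_pos_of_pos (by positivity)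
  set H : (Fin n → ℤ) → Set (Fin n → ℝ) := fun z => {u : Fin n → ℝ | ∑ i, (z i : ℝ) * u i ≤ 0} ∩
      Set.pi Set.univ (fun _ => Set.Ioo (-(1/2):ℝ) (1/2)) with hH
  have hHm : ∀ z, MeasurableSet (H z) := by
    intro z
    refine MeasurableSet.inter ?_ (MeasurableSet.univ_pi fun _ => measurableSet_Ioo)
    exact measurableSet_le (by fun_prop) (by fun_prop)
  let T : (Fin n → ℤ) → Set (Fin n → ℝ) := fun z =>
    (fun x => (fun i => -(z i : ℝ)) + x) ⁻¹' H z
  have hTm : ∀ z, MeasurableSet (T z) := fun z => (measurable_const_add _) (hHm z)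
  have hTv : ∀ z, volume (T z) = volume (H z) := fun z => measure_preimage_add _ _ _
  have hdis : ((zball n μ : Finset _) : Set (Fin n → ℤ)).PairwiseDisjoint T := by
    intro z _ w _ hzw
    rw [Function.onFun, Set.disjoint_left]
    intro x hx hy
    apply hzw
    ext i
    have h1 := hx.2 i trivial
    have h2 := hy.2 i trivial
    simp only [Set.mem_Ioo, Pi.add_apply] at h1 h2
    have a1 : (z i : ℝ) < w i + 1 := by linarith
    have a2 : (w i : ℝ) < z i + 1 := by linarith
    have b1 : z i < w i + 1 := by exact_mod_cast a1
    have b2 : w i < z i + 1 := by exact_mod_cast a2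
    omega
  have hsub : (⋃ z ∈ zball n μ, T z) ⊆ {x : Fin n → ℝ | ∑ i, x i ^ 2 ≤ (μ:ℝ) + n/4} := by
    intro x hx
    simp only [Set.mem_iUnion] at hx
    obtain ⟨z, hz, hx⟩ := hx
    rw [mem_zball] at hz
    have hz' : ∑ i, (z i : ℝ) ^ 2 ≤ (μ:ℝ) := by exact_mod_cast hz
    set u : Fin n → ℝ := (fun i => -(z i : ℝ)) + x with hu
    have h1 : ∑ i, (z i : ℝ) * u i ≤ 0 := hx.1
    have h2 : ∑ i, u i ^ 2 ≤ ∑ i : Fin n, (1/4 : ℝ) := by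
      refine Finset.sum_le_sum fun i _ => ?_
      have := hx.2 i trivial
      change u i ∈ Set.Ioo (-(1/2):ℝ) (1/2) at this
      simp only [Set.mem_Ioo] at this
      nlinarith
    simp only [Finset.sum_const, Finset.card_univ, Fintype.card_fin, nsmul_eq_mul] at h2
    have h3 : ∑ i, x i ^ 2 = ∑ i, (z i : ℝ) ^ 2 + 2 * ∑ i, (z i : ℝ) * u i + ∑ i, u i ^ 2 := by
      rw [Finset.mul_sum, ← Finset.sum_add_distrib, ← Finset.sum_add_distrib]
      refine Finset.sum_congr rfl fun i _ => ?_
      simp only [hu, Pi.add_apply]; ring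
    simp only [Set.mem_ofPred_eq]
    linarith
  have h1 := measure_mono (μ := volume) hsub
  rw [measure_biUnion_finset hdis (fun z _ => hTm z), vol_ball n hn _ (by positivity)] at h1
  have h2 : ((zball n μ).card : ENNReal) ≤ 2 * ∑ z ∈ zball n μ, volume (T z) := by
    rw [Finset.mul_sum, Finset.card_eq_sum_ones, Nat.cast_sum]
    refine Finset.sum_le_sum fun z _ => ?_
    rw [hTv, Nat.cast_one]
    exact half_cube n (fun i => (z i : ℝ))
  have h3 : ((zball n μ).card : ENNReal) ≤ 2 * ENNReal.ofReal _ := h2.trans (by gcongr)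
  rw [show (2:ENNReal) = ENNReal.ofReal 2 by simp, ← ENNReal.ofReal_mul (by norm_num),
    ← ENNReal.ofReal_natCast, ENNReal.ofReal_le_ofReal_iff (by positivity)] at h3
  exact h3

/-- half of the nonzero vectors -/
lemma pos_card (n μ : ℕ) (c : Fin n → ℤ) :
    2 * ((zball n μ).filter (fun w => 0 < ∑ i, c i * w i)).card + 1 ≤ (zball n μ).card := by
  set P := (zball n μ).filter (fun w => 0 < ∑ i, c i * w i) with hP
  set N := (zball n μ).filter (fun w => ∑ i, c i * w i < 0) with hN
  have hPN : P.card = N.card := by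
    refine Finset.card_bij (fun w _ => -w) ?_ (fun _ _ _ _ h => neg_injective h) ?_
    · intro w hw
      simp only [hP, hN, Finset.mem_filter, mem_zball, Pi.neg_apply, mul_neg,
        Finset.sum_neg_distrib, neg_sq] at hw ⊢
      exact ⟨hw.1, by linarith [hw.2]⟩
    · intro w hw
      refine ⟨-w, ?_, neg_neg w⟩
      simp only [hP, hN, Finset.mem_filter, mem_zball, Pi.neg_apply, mul_neg,
        Finset.sum_neg_distrib, neg_sq] at hw ⊢
      exact ⟨hw.1, by linarith [hw.2]⟩
  have hd : Disjoint P N := by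
    rw [Finset.disjoint_left]
    intro w h1 h2
    simp only [hP, hN, Finset.mem_filter] at h1 h2
    linarith [h1.2, h2.2]
  have h0 : (0 : Fin n → ℤ) ∉ P ∪ N := by simp [hP, hN]
  have hs : insert 0 (P ∪ N) ⊆ zball n μ := by
    intro w hw
    simp only [Finset.mem_insert, Finset.mem_union, hP, hN, Finset.mem_filter] at hw
    rcases hw with rfl | h | h
    · rw [mem_zball]; simp
    · exact h.1
    · exact h.1
  have := Finset.card_le_card hs
  rw [Finset.card_insert_of_notMem h0, Finset.card_union_of_disjoint hd] at this
  omega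

lemma constr (μ n : ℕ) (hμ : 2 ≤ μ) (K : ℕ) (hK : ∀ k : ℕ, k ^ 2 < μ → k ≤ K) (m : ℕ) (hm : m ≤ n) :
    ∃ s : Fin (n + 1) → ℕ, s 0 = 1 ∧ (∀ i, 0 < s i) ∧
      (∀ i, 2 * s i ≤ 2 + K * ((zball n μ).card - 1)) ∧
      (∀ z : Fin (n + 1) → ℤ, (∀ i : Fin (n+1), m < i.val → z i = 0) → z ≠ 0 →
        (∑ i, (s i : ℤ) * z i) = 0 → (μ : ℤ) ≤ ∑ i, (z i) ^ 2) := by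
  induction m with
  | zero =>
    refine ⟨fun _ => 1, rfl, fun _ => one_pos, fun _ => by simp, ?_⟩
    intro z hz hz0 hs
    exfalso
    apply hz0
    have hzi : ∀ i : Fin (n+1), i ≠ 0 → z i = 0 := fun i hi =>
      hz i (Nat.pos_of_ne_zero fun h => hi (Fin.ext h))
    rw [Finset.sum_eq_single 0 (fun b _ hb => by simp [hzi b hb]) (by simp)] at hs
    ext i
    by_cases hi : i = 0
    · subst hi; simpa using hs
    · exact hzi i hi
  | succ m ih =>
    obtain ⟨s, hs0, hspos, hsB, hsz⟩ := ih (by omega)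
    let p : Fin (n+1) := ⟨m+1, by omega⟩
    let c : Fin n → ℤ := fun i => (s (p.succAbove i) : ℤ)
    set P := (zball n μ).filter (fun w => 0 < ∑ i, c i * w i) with hP
    have hPc : 2 * P.card + 1 ≤ (zball n μ).card := pos_card n μ c
    let forb : Finset ℕ := (Finset.Icc 1 K ×ˢ P).image
      (fun q => ((∑ i, c i * q.2 i) / (q.1 : ℤ)).toNat)
    have hforb : forb.card ≤ K * P.card := by
      refine Finset.card_image_le.trans ?_
      rw [Finset.card_product]; simp
    obtain ⟨t, ht1, ht2⟩ : ∃ t ∈ Finset.Icc 1 (forb.card + 1), t ∉ forb := by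
      by_contra! h
      have := Finset.card_le_card (show Finset.Icc 1 (forb.card + 1) ⊆ forb from h)
      simp at this
    rw [Finset.mem_Icc] at ht1
    have hp0 : (0 : Fin (n+1)) ≠ p := by
      intro h; have := congrArg Fin.val h; simp [p] at this
    refine ⟨Function.update s p t, ?_, ?_, ?_, ?_⟩
    · rw [Function.update_of_ne hp0, hs0]
    · intro i
      by_cases hi : i = p
      · subst hi; simp; omega
      · rw [Function.update_of_ne hi]; exact hspos i
    · intro i
      by_cases hi : i = p
      · subst hi
        rw [Function.update_self]
        have : K * (2 * P.card) ≤ K * ((zball n μ).card - 1) := Nat.mul_le_mul_left _ (by omega)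
        nlinarith
      · rw [Function.update_of_ne hi]; exact hsB i
    · -- main
      have key : ∀ z : Fin (n+1) → ℤ, z p < 0 →
          (∑ i, ((Function.update s p t i : ℕ) : ℤ) * z i) = 0 → (μ : ℤ) ≤ ∑ i, (z i) ^ 2 := by
        intro z hzp hsum
        by_contra! hlt
        rw [Fin.sum_univ_succAbove _ p] at hsum hlt
        simp only [Function.update_self, ne_eq, Fin.succAbove_ne, not_false_eq_true,
          Function.update_of_ne] at hsum
        apply ht2
        obtain ⟨k, hk⟩ : ∃ k : ℕ, z p = -(k:ℤ) := ⟨(-z p).toNat, by omega⟩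
        have hkpos : 0 < k := by omega
        rw [hk] at hsum hlt
        have hnn : 0 ≤ ∑ i, z (p.succAbove i) ^ 2 := Finset.sum_nonneg fun _ _ => sq_nonneg _
        have hkt : ∑ i, c i * z (p.succAbove i) = (t:ℤ) * k := by
          simp only [c]; linarith
        have hk2 : k ^ 2 < μ := by
          have : (k:ℤ) ^ 2 < μ := by nlinarith
          exact_mod_cast this
        rw [Finset.mem_image]
        refine ⟨(k, fun i => z (p.succAbove i)), ?_, ?_⟩
        · rw [Finset.mem_product, Finset.mem_Icc, hP, Finset.mem_filter, mem_zball]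
          refine ⟨⟨hkpos, hK k hk2⟩, ?_, ?_⟩
          · simp only; nlinarith
          · simp only [hkt]
            have : 0 < t := by omega
            positivity
        · simp only [hkt]
          rw [Int.mul_ediv_cancel _ (by positivity)]
          simp
      intro z hz hz0 hsum
      rcases lt_trichotomy (z p) 0 with h | h | h
      · exact key z h hsum
      · refine hsz z ?_ hz0 ?_
        · intro i hi
          by_cases hip : i = p
          · rw [hip, h]
          · refine hz i ?_
            have : i.val ≠ m + 1 := fun h => hip (Fin.ext h)
            omega
        · rw [← hsum]
          refine Finset.sum_congr rfl fun i _ => ?_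
          by_cases hip : i = p
          · rw [hip, h]; simp
          · rw [Function.update_of_ne hip]
      · have := key (-z) (by simpa using h) (by simpa using hsum)
        simpa using this

theorem stmt_15 (μ n : ℕ) (hμ : 2 ≤ μ) (hn : 1 ≤ n) :
    ∃ s : Fin (n + 1) → ℕ, s 0 = 1 ∧ (∀ i, 0 < s i) ∧
      (∀ z : Fin (n + 1) → ℤ, z ≠ 0 → (∑ i, (s i : ℤ) * z i) = 0 →
        (μ : ℤ) ≤ ∑ i, (z i) ^ 2) ∧
      ((1 + (n : ℝ) / (4 * μ)) ^ (-(n : ℝ) / 2) / (2 ^ n * Real.sqrt ((n + 1) * μ)) ≤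
        Real.sqrt ((μ : ℝ) ^ n / (4 ^ n * ∑ i, (s i : ℝ) ^ 2)) *
          (π ^ ((n : ℝ) / 2) / Real.Gamma ((n : ℝ) / 2 + 1))) := by
  obtain ⟨s, hs0, hspos, hsB, hsz⟩ := constr μ n hμ (Nat.sqrt μ) (fun k hk => by
    rw [Nat.le_sqrt']; exact hk.le) n le_rfl
  refine ⟨s, hs0, hspos, fun z hz h => hsz z (fun i hi => by omega) hz h, ?_⟩
  have hG : 0 < Real.Gamma ((n : ℝ) / 2 + 1) := Real.Gamma_pos_of_pos (by positivity)
  have hC3 := zball_card_ge (μ := μ) hn (by omega)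
  have hCle := zball_card_le n μ hn
  have hμ0 : (0:ℝ) < μ := by positivity
  set V := π ^ ((n : ℝ) / 2) / Real.Gamma ((n : ℝ) / 2 + 1) with hV
  have hVpos : 0 < V := by positivity
  set C := (zball n μ).card
  set A := ((μ:ℝ) + n/4) ^ ((n:ℝ)/2) with hA
  have hApos : 0 < A := by positivity
  have hbound : ∀ i, (s i : ℝ) ≤ √μ * (A * V) := by
    intro i
    have h1 : (2:ℝ) * s i ≤ 2 + Nat.sqrt μ * (C - 1) := by
      have := hsB i
      have h' : ((2 * s i : ℕ) : ℝ) ≤ ((2 + Nat.sqrt μ * (C - 1) : ℕ) : ℝ) := by exact_mod_cast this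
      push_cast [Nat.cast_sub (show 1 ≤ C by omega)] at h'
      exact h'
    have hC3' : (3:ℝ) ≤ C := by exact_mod_cast hC3
    have hKle : (Nat.sqrt μ : ℝ) ≤ √μ := Real.nat_sqrt_le_real_sqrt
    have h2 : 2 + (Nat.sqrt μ : ℝ) * (C - 1) ≤ √μ * C := by
      rcases Nat.lt_or_ge (Nat.sqrt μ) 2 with h | h
      · have h4 : (Nat.sqrt μ : ℝ) ≤ 1 := by exact_mod_cast (by omega : Nat.sqrt μ ≤ 1)
        have h5 : (4/3 : ℝ) ≤ √μ := by
          apply Real.le_sqrt_of_sq_le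
          have : (2:ℝ) ≤ μ := by exact_mod_cast hμ
          linarith
        nlinarith
      · have h4 : (2:ℝ) ≤ (Nat.sqrt μ : ℝ) := by exact_mod_cast h
        nlinarith
    have h3 : √μ * C ≤ √μ * (2 * (A * V)) := by gcongr
    linarith
  have hsum : ∑ i, (s i : ℝ) ^ 2 ≤ (n + 1) * (√μ * (A * V)) ^ 2 := by
    calc ∑ i, (s i : ℝ) ^ 2 ≤ ∑ i : Fin (n+1), (√μ * (A * V)) ^ 2 :=
          Finset.sum_le_sum fun i _ => by gcongr; exact hbound i
      _ = _ := by simp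
  have hspos' : 0 < ∑ i, (s i : ℝ) ^ 2 :=
    Finset.sum_pos (fun i _ => by have := hspos i; positivity) Finset.univ_nonempty
  set B := (1 + (n : ℝ) / (4 * μ)) ^ ((n : ℝ) / 2) with hB
  have hBpos : 0 < B := by positivity
  have hneg : (1 + (n : ℝ) / (4 * μ)) ^ (-(n : ℝ) / 2) = B⁻¹ := by
    rw [neg_div, Real.rpow_neg (by positivity)]
  have hAB : A ^ 2 = μ ^ n * B ^ 2 := by
    have e : ∀ x : ℝ, 0 ≤ x → (x ^ ((n:ℝ)/2)) ^ 2 = x ^ n := by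
      intro x hx
      rw [← Real.rpow_natCast, ← Real.rpow_mul hx, ← Real.rpow_natCast]
      congr 1; push_cast; ring
    rw [hA, hB, e _ (by positivity), e _ (by positivity), ← mul_pow]
    congr 1; field_simp
  rw [hneg]
  rw [← div_le_iff₀ hVpos]
  apply Real.le_sqrt_of_sq_le
  have hX : √((n + 1) * (μ : ℝ)) ^ 2 = (n + 1) * μ := Real.sq_sqrt (by positivity)
  have h4 : ((2:ℝ) ^ n) ^ 2 = 4 ^ n := by rw [← pow_mul, mul_comm, pow_mul]; norm_num
  have hS : ∑ i, (s i : ℝ) ^ 2 ≤ (n + 1) * μ * (μ ^ n * B ^ 2) * V ^ 2 := by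
    refine hsum.trans (le_of_eq ?_)
    rw [← hAB, mul_pow, mul_pow, Real.sq_sqrt hμ0.le]; ring
  have e1 : (B⁻¹ / (2 ^ n * √((n + 1) * (μ : ℝ))) / V) ^ 2
      = 1 / (4 ^ n * (B ^ 2 * ((n + 1) * μ) * V ^ 2)) := by
    rw [div_pow, div_pow, mul_pow, hX, h4, inv_pow]
    field_simp
  rw [e1, div_le_div_iff₀ (by positivity) (by positivity), one_mul]
  calc (4:ℝ) ^ n * ∑ i, (s i : ℝ) ^ 2 ≤ 4 ^ n * ((n + 1) * μ * (μ ^ n * B ^ 2) * V ^ 2) := by gcongr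
    _ = _ := by ring
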